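/- Let A = S/I be the homogeneous coordinate ring of the degree-n rational normal (Veronese) curve in ℙⁿ, where I ⊆ S is the ideal generated by the quadrics xᵢxⱼ − x_k x_m for all indices 0 ≤ i, j, k, m ≤ n with i + j = k + m. Then for every p ≥ 1 the ℂ-vector space Tor_p^S(A, ℂ) is finite-dimensional of dimension p · C(n, p+1) (the binomial coefficient); in particular Tor_p^S(A, ℂ) = 0 for p ≥ n. -/

import Mathlib

/-!
Write `K(l; M)` for the Koszul complex of a list `l` of variables with coefficients in `M`. Since
`K(X_0, …, X_n; S)` is a free resolution of `ℂ`, the module `Tor_p(A, ℂ)` is the homology of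
`K(X_0, …, X_n; A)` (`KComplex.nonempty_tor_equiv`). A variable which is a nonzerodivisor on the
coefficients may be dropped from the list at the price of dividing the coefficients by it
(`KComplex.nonempty_H_equiv`); iterating this also gives the resolution property itself
(`isRes_map_X`).

The parametrisation `X_i ↦ s tⁱ` together with a normal form of monomials modulo the quadrics
describes the ideals `I`, `(I, X_0)` and `(I, X_0, X_n)` by vanishing of coefficients
(`mem_veroneseIdeal_iff`, `mem_J₁_iff`, `mem_J₂_iff`). Consequently `X_0, X_n` is a regular sequence
on `A`, and the Artinian reduction `B = S / (I, X_0, X_n)` has basis `1, X_1, …, X_{n-1}` with all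
products of two of these variables zero. Hence `Tor_p(A, ℂ)` is the homology of
`K(X_1, …, X_{n-1}; B)`.

For `p ≥ 1` the `p`-cycles of that complex are exactly the kernel of the map to
`K(X_1, …, X_{n-1}; ℂ)` (`d_eq_zero_iff_kmap_artAug`), so with `r = n - 1` dimensions give
`dim H_p = r C(r, p) - C(r, p + 1)`, that is `p C(n, p + 1)`.
-/

open CategoryTheory MvPolynomial

noncomputable section

/-- The polynomial ring `S = ℂ[x₀, …, xₙ]` in `n + 1` variables. -/
abbrev Spoly (n : ℕ) : Type := MvPolynomial (Fin (n + 1)) ℂ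

/-- The ideal of the degree-`n` rational normal (Veronese) curve in `ℙⁿ`, generated by
the quadrics `xᵢxⱼ − x_k x_m` for all indices with `i + j = k + m`. -/
abbrev veroneseIdeal (n : ℕ) : Ideal (Spoly n) :=
  Ideal.span {f : Spoly n | ∃ i j k m : Fin (n + 1),
    (i : ℕ) + (j : ℕ) = (k : ℕ) + (m : ℕ) ∧ f = X i * X j - X k * X m}

/-- The homogeneous coordinate ring `A = S / I` of the rational normal curve of degree `n`. -/
abbrev Aalg (n : ℕ) : Type := Spoly n ⧸ veroneseIdeal n

/-- `ℂ` regarded as an `S`-module via the augmentation sending each variable to `0`. -/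
def CC (n : ℕ) : Type := ℂ

instance (n : ℕ) : AddCommGroup (CC n) := inferInstanceAs (AddCommGroup ℂ)

noncomputable instance (n : ℕ) : Module (Spoly n) (CC n) :=
  Module.compHom ℂ (MvPolynomial.eval (fun _ : Fin (n + 1) => (0 : ℂ)))

/-- The `S`-module `Tor_p^S(A, ℂ)`. -/
noncomputable def TorModule (n p : ℕ) : ModuleCat (Spoly n) :=
  ((Tor (ModuleCat.{0} (Spoly n)) p).obj (ModuleCat.of (Spoly n) (Aalg n))).obj
    (ModuleCat.of (Spoly n) (CC n))

/-- The `ℂ`-vector space structure on `Tor_p^S(A, ℂ)`, obtained by restriction of scalars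
along `ℂ → S`. -/
noncomputable instance (n p : ℕ) : Module ℂ (TorModule n p) :=
  Module.compHom (TorModule n p) (algebraMap ℂ (Spoly n))

/-! ### Koszul complexes -/

/-- A nonnegatively graded chain complex of `R`-modules in concrete form. The index is shifted by
one: `X (p + 1)` is the term of homological degree `p`, and `X 0` stands for degree `-1`.
With truncated subtraction this makes `X p × X (p - 1)` the `p`-th term of a mapping cone
for all `p`, and the differential `X (p + 1) → X p` needs no transport. -/
structure KComplex (R : Type) [CommRing R] where
  /-- the terms -/
  X : ℕ → Type
  [grp : ∀ p, AddCommGroup (X p)]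
  [mod : ∀ p, Module R (X p)]
  /-- the differential -/
  d : ∀ p, X p →ₗ[R] X (p - 1)
  dd : ∀ p z, d (p - 1) (d p z) = 0

attribute [instance] KComplex.grp KComplex.mod

namespace KComplex

section General

variable {R : Type} [CommRing R]

/-- The module `M` placed in homological degree `0`. -/
def base (R : Type) [CommRing R] (M : Type) [AddCommGroup M] [Module R M] : KComplex R where
  X p := PLift (p = 1) → M
  d _ := 0
  dd _ _ := rfl

/-- The mapping cone of multiplication by `x` on `C`. -/
def cone (x : R) (C : KComplex R) : KComplex R where
  X p := C.X p × C.X (p - 1)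
  d p := LinearMap.prod
    ((C.d p).comp (LinearMap.fst _ _ _) + x • LinearMap.snd _ _ _)
    (-((C.d (p - 1)).comp (LinearMap.snd _ _ _)))
  dd p z := by
    ext
    · simp [C.dd]
    · simp [C.dd]

/-- The Koszul complex `K(l; M)` of a list of ring elements with coefficients in `M`, as an
iterated mapping cone. -/
def koszul : List R → (M : Type) → [AddCommGroup M] → [Module R M] → KComplex R
  | [], M, _, _ => base R M
  | x :: l, M, _, _ => cone x (koszul l M)

variable {M N P : Type} [AddCommGroup M] [Module R M] [AddCommGroup N] [Module R N]
  [AddCommGroup P] [Module R P]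

theorem cone_d_apply (x : R) (C : KComplex R) (p : ℕ) (a : C.X p) (b : C.X (p - 1)) :
    (cone x C).d p (a, b) = (C.d p a + x • b, -C.d (p - 1) b) := rfl

/-- Functoriality of the Koszul complex in the coefficient module. -/
def kmap : (l : List R) → (M →ₗ[R] N) → ∀ p, (koszul l M).X p →ₗ[R] (koszul l N).X p
  | [], f, p => f.compLeft (PLift (p = 1))
  | _ :: l, f, p => LinearMap.prodMap (kmap l f p) (kmap l f (p - 1))

theorem kmap_cons (x : R) (l : List R) (f : M →ₗ[R] N) (p : ℕ) (a : (koszul l M).X p)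
    (b : (koszul l M).X (p - 1)) :
    kmap (x :: l) f p ((a, b) : (koszul l M).X p × (koszul l M).X (p - 1)) =
      ((kmap l f p a, kmap l f (p - 1) b) : (koszul l N).X p × (koszul l N).X (p - 1)) := rfl

theorem kmap_d (l : List R) (f : M →ₗ[R] N) (p : ℕ) (z : (koszul l M).X p) :
    kmap l f (p - 1) ((koszul l M).d p z) = (koszul l N).d p (kmap l f p z) := by
  induction l generalizing p with
  | nil => exact map_zero _
  | cons x l ih =>
    obtain ⟨a, b⟩ := z
    refine Prod.ext ?_ ?_
    · change kmap l f (p - 1) ((koszul l M).d p a + x • b) =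
        (koszul l N).d p (kmap l f p a) + x • kmap l f (p - 1) b
      rw [map_add, map_smul, ih]
    · change kmap l f (p - 1 - 1) (-(koszul l M).d (p - 1) b) =
        -(koszul l N).d (p - 1) (kmap l f (p - 1) b)
      rw [map_neg, ih]

theorem kmap_surjective (l : List R) {f : M →ₗ[R] N} (hf : Function.Surjective f) (p : ℕ) :
    Function.Surjective (kmap l f p) := by
  induction l generalizing p with
  | nil => exact hf.comp_left
  | cons x l ih => exact (ih p).prodMap (ih (p - 1))

/-- Multiplication by `x` on `K(l; M)` is injective when it is so on `M`. -/
theorem smul_injective (l : List R) {x : R} (hx : ∀ m : M, x • m = 0 → m = 0) (p : ℕ)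
    (z : (koszul l M).X p) (hz : x • z = 0) : z = 0 := by
  induction l generalizing p with
  | nil => exact funext fun i => hx _ (congrFun hz i)
  | cons y l ih =>
    exact Prod.ext (ih p z.1 (congrArg Prod.fst hz)) (ih (p - 1) z.2 (congrArg Prod.snd hz))

/-- If the kernel of `f` is `x M`, then the kernel of `K(l; f)` is `x K(l; M)`. -/
theorem exists_smul_of_kmap_eq_zero (l : List R) {x : R} {f : M →ₗ[R] N}
    (hf : ∀ m, f m = 0 → ∃ m', m = x • m') (p : ℕ) (z : (koszul l M).X p)
    (hz : kmap l f p z = 0) : ∃ w, z = x • w := by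
  induction l generalizing p with
  | nil =>
    choose w hw using fun i => hf (z i) (congrFun hz i)
    exact ⟨w, funext hw⟩
  | cons y l ih =>
    obtain ⟨w₁, h₁⟩ := ih p z.1 (congrArg Prod.fst hz)
    obtain ⟨w₂, h₂⟩ := ih (p - 1) z.2 (congrArg Prod.snd hz)
    exact ⟨(w₁, w₂), Prod.ext h₁ h₂⟩

theorem kmap_smul_eq_zero (l : List R) {x : R} {f : M →ₗ[R] N}
    (hf : ∀ m, f (x • m) = 0) (p : ℕ) (z : (koszul l M).X p) : kmap l f p (x • z) = 0 := by
  induction l generalizing p with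
  | nil => exact funext fun i => hf _
  | cons y l ih => exact Prod.ext (ih p z.1) (ih (p - 1) z.2)

/-- If `x` kills the kernel of `f`, then it kills the kernel of `K(l; f)`. -/
theorem smul_eq_zero_of_kmap_eq_zero (l : List R) {x : R} {f : M →ₗ[R] N}
    (hf : ∀ m, f m = 0 → x • m = 0) (p : ℕ) (z : (koszul l M).X p)
    (hz : kmap l f p z = 0) : x • z = 0 := by
  induction l generalizing p with
  | nil => exact funext fun i => hf _ (congrFun hz i)
  | cons y l ih =>
    exact Prod.ext (ih p z.1 (congrArg Prod.fst hz)) (ih (p - 1) z.2 (congrArg Prod.snd hz))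

instance subsingleton_X_zero (l : List R) : Subsingleton ((koszul l M).X 0) := by
  induction l with
  | nil => exact ⟨fun a b => funext fun i => absurd i.down (by decide)⟩
  | cons x l ih => exact inferInstanceAs (Subsingleton ((koszul l M).X 0 × (koszul l M).X 0))

/-! ### Passing to the quotient by a regular element -/

/-- The chain map `K(x :: l; M) → K(l; N)` induced by `q : M → N`; it is compatible with the
differentials when `q` kills `x M`. -/
def coneMap (x : R) (l : List R) (q : M →ₗ[R] N) (p : ℕ) :
    (koszul (x :: l) M).X p →ₗ[R] (koszul l N).X p :=
  (kmap l q p).comp (LinearMap.fst R ((koszul l M).X p) ((koszul l M).X (p - 1)))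

theorem coneMap_d (x : R) (l : List R) {q : M →ₗ[R] N} (hq : ∀ m, q (x • m) = 0) (p : ℕ)
    (z : (koszul (x :: l) M).X p) :
    coneMap x l q (p - 1) ((koszul (x :: l) M).d p z) = (koszul l N).d p (coneMap x l q p z) := by
  obtain ⟨a, b⟩ := z
  change kmap l q (p - 1) ((koszul l M).d p a + x • b) = (koszul l N).d p (kmap l q p a)
  rw [map_add, kmap_smul_eq_zero l hq, add_zero, kmap_d]

/-- Cycles lift along `coneMap`. -/
theorem exists_cycle_lift (x : R) (l : List R) {q : M →ₗ[R] N}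
    (hx : ∀ m : M, x • m = 0 → m = 0) (hs : Function.Surjective q)
    (hk : ∀ m, q m = 0 → ∃ m', m = x • m') (p : ℕ) (z' : (koszul l N).X p)
    (hz' : (koszul l N).d p z' = 0) :
    ∃ z, (koszul (x :: l) M).d p z = 0 ∧ coneMap x l q p z = z' := by
  obtain ⟨a, rfl⟩ := kmap_surjective l hs p z'
  rw [← kmap_d] at hz'
  obtain ⟨b, hb⟩ := exists_smul_of_kmap_eq_zero l hk _ _ hz'
  refine ⟨(a, -b), Prod.ext ?_ ?_, rfl⟩
  · change (koszul l M).d p a + x • (-b) = 0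
    rw [hb, smul_neg, add_neg_cancel]
  · change -(koszul l M).d (p - 1) (-b) = 0
    rw [map_neg, neg_neg]
    apply smul_injective l hx
    rw [← map_smul, ← hb, dd]

/-- A cycle whose image under `coneMap` is a boundary is itself a boundary. -/
theorem exists_boundary_lift (x : R) (l : List R) {q : M →ₗ[R] N}
    (hx : ∀ m : M, x • m = 0 → m = 0) (hs : Function.Surjective q)
    (hk : ∀ m, q m = 0 → ∃ m', m = x • m') (p : ℕ) (z : (koszul (x :: l) M).X p)
    (hz : (koszul (x :: l) M).d p z = 0) (w' : (koszul l N).X (p + 1))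
    (hw' : (koszul l N).d (p + 1) w' = coneMap x l q p z) :
    ∃ w, (koszul (x :: l) M).d (p + 1) w = z := by
  obtain ⟨a, b⟩ := z
  obtain ⟨w, rfl⟩ := kmap_surjective l hs _ w'
  have h1 : (koszul l M).d p a + x • b = 0 := congrArg Prod.fst hz
  obtain ⟨y, hy⟩ : ∃ y : (koszul l M).X p, y = (koszul l M).d (p + 1) w := ⟨_, rfl⟩
  have hdy : (koszul l M).d p y = 0 := by
    rw [hy]
    exact (koszul l M).dd (p + 1) w
  have h2 : kmap l q p (a - y) = 0 := by
    rw [map_sub, sub_eq_zero, hy]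
    exact hw'.symm.trans (kmap_d l q (p + 1) w).symm
  obtain ⟨c, hc⟩ := exists_smul_of_kmap_eq_zero l hk _ _ h2
  refine ⟨(w, c), Prod.ext ?_ ?_⟩
  · have h4 : y + x • c = a := by rw [← hc, add_sub_cancel]
    rw [hy] at h4
    exact h4
  · have h3 : x • ((koszul l M).d p c + b) = 0 := by
      rw [smul_add, ← map_smul, ← hc, map_sub, hdy, sub_zero, h1]
    exact neg_eq_of_add_eq_zero_right (smul_injective l hx _ _ h3)

/-- The homology of `C` in homological degree `p`. -/
abbrev H (C : KComplex R) (p : ℕ) : Type :=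
  LinearMap.ker (C.d (p + 1)) ⧸
    (LinearMap.range (C.d (p + 2))).submoduleOf (LinearMap.ker (C.d (p + 1)))

/-- If `x` is a nonzerodivisor on `M` and `N = M / x M`, then `K(x :: l; M)` and `K(l; N)` have
the same homology. -/
theorem nonempty_H_equiv (x : R) (l : List R) (q : M →ₗ[R] N)
    (hx : ∀ m : M, x • m = 0 → m = 0) (hs : Function.Surjective q)
    (hq : ∀ m, q (x • m) = 0)
    (hk : ∀ m, q m = 0 → ∃ m', m = x • m') (p : ℕ) :
    Nonempty (H (koszul (x :: l) M) p ≃ₗ[R] H (koszul l N) p) := by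
  let φ : LinearMap.ker ((koszul (x :: l) M).d (p + 1)) →ₗ[R]
      LinearMap.ker ((koszul l N).d (p + 1)) :=
    (coneMap x l q (p + 1)).restrict fun z hz => by
      rw [LinearMap.mem_ker] at hz ⊢
      rw [← coneMap_d x l hq, hz, map_zero]
  let ψ := (Submodule.mkQ ((LinearMap.range ((koszul l N).d (p + 2))).submoduleOf
    (LinearMap.ker ((koszul l N).d (p + 1))))).comp φ
  have hψ : Function.Surjective ψ := by
    refine (Submodule.mkQ_surjective _).comp ?_
    rintro ⟨z', hz'⟩
    obtain ⟨z, hz, e⟩ := exists_cycle_lift x l hx hs hk _ z' hz'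
    exact ⟨⟨z, hz⟩, Subtype.ext e⟩
  have hker : LinearMap.ker ψ = (LinearMap.range ((koszul (x :: l) M).d (p + 2))).submoduleOf
    (LinearMap.ker ((koszul (x :: l) M).d (p + 1))) := by
    ext ⟨z, hz⟩
    rw [LinearMap.mem_ker, LinearMap.comp_apply, Submodule.mkQ_apply,
      Submodule.Quotient.mk_eq_zero]
    constructor
    · rintro ⟨w', hw'⟩
      exact exists_boundary_lift x l hx hs hk _ z hz w' hw'
    · rintro ⟨w, hw⟩
      refine ⟨coneMap x l q (p + 2) w, ?_⟩
      rw [← coneMap_d x l hq, hw]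
      rfl
  exact ⟨(Submodule.quotEquivOfEq _ _ hker.symm).trans (ψ.quotKerEquivOfSurjective hψ)⟩

/-! ### Resolutions -/

/-- The augmentation from the degree `0` term of `K(l; M)` to `M`. -/
def aug : (l : List R) → (koszul l M).X 1 →ₗ[R] M
  | [] => LinearMap.proj (PLift.up rfl)
  | _ :: l => (aug l).comp (LinearMap.fst R ((koszul l M).X 1) ((koszul l M).X 0))

theorem aug_kmap (l : List R) (f : M →ₗ[R] N) (z : (koszul l M).X 1) :
    aug l (kmap l f 1 z) = f (aug l z) := by
  induction l with
  | nil => rfl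
  | cons x l ih => exact ih z.1

theorem aug_surjective (l : List R) : Function.Surjective (aug (M := M) l) := by
  induction l with
  | nil => exact fun m => ⟨fun _ => m, rfl⟩
  | cons x l ih => exact ih.comp Prod.fst_surjective

/-- `K(l; M)` together with the augmentation followed by `f : M → N` is exact at all terms. -/
def IsRes (l : List R) (f : M →ₗ[R] N) : Prop :=
  (∀ p, ∀ z : (koszul l M).X (p + 2), (koszul l M).d (p + 2) z = 0 →
    ∃ w : (koszul l M).X (p + 3), (koszul l M).d (p + 3) w = z) ∧
  ∀ z : (koszul l M).X 1, f (aug l z) = 0 ↔ ∃ w : (koszul l M).X 2, (koszul l M).d 2 w = z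

theorem isRes_nil {f : M →ₗ[R] N} (hf : Function.Injective f) : IsRes ([] : List R) f := by
  refine ⟨fun p z _ => ⟨0, ?_⟩, fun z => ⟨fun h => ⟨0, ?_⟩, ?_⟩⟩
  · rw [map_zero]
    exact funext fun i => absurd i.down (by omega)
  · rw [map_zero]
    exact funext fun i => ((map_eq_zero_iff f hf).1 h).symm
  · rintro ⟨w, rfl⟩
    exact map_zero f

/-- If `x` is a nonzerodivisor on `M` and `K(l; M / x M)` resolves `P`, then so does
`K(x :: l; M)`. -/
theorem IsRes.cons (x : R) (l : List R) {q : M →ₗ[R] N} {f : N →ₗ[R] P}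
    (hx : ∀ m : M, x • m = 0 → m = 0) (hs : Function.Surjective q)
    (hq : ∀ m, q (x • m) = 0)
    (hk : ∀ m, q m = 0 → ∃ m', m = x • m') (h : IsRes l f) :
    IsRes (x :: l) (f.comp q) := by
  have key : ∀ z : (koszul (x :: l) M).X 1, f (aug l (coneMap x l q 1 z)) =
      (f.comp q) (aug (x :: l) z) := fun z => congrArg f (aug_kmap l q z.1)
  refine ⟨fun p z hz => ?_, fun z => ⟨fun hz => ?_, ?_⟩⟩
  · obtain ⟨w', hw'⟩ := h.1 p (coneMap x l q (p + 2) z)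
      (by rw [← coneMap_d x l hq, hz, map_zero])
    exact exists_boundary_lift x l hx hs hk _ z hz w' hw'
  · obtain ⟨w', hw'⟩ := (h.2 (coneMap x l q 1 z)).1 ((key z).trans hz)
    exact exists_boundary_lift x l hx hs hk 1 z
      (Subsingleton.elim (α := (koszul (x :: l) M).X 0) _ _) w' hw'
  · rintro ⟨w, rfl⟩
    rw [← key]
    exact (h.2 _).2 ⟨coneMap x l q 2 w, (coneMap_d x l hq 2 w).symm⟩

/-! ### Tensor products -/

instance free_X (l : List R) (p : ℕ) : Module.Free R ((koszul l R).X p) := by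
  induction l generalizing p with
  | nil => exact inferInstanceAs (Module.Free R (PLift (p = 1) → R))
  | cons x l ih =>
    exact inferInstanceAs (Module.Free R ((koszul l R).X p × (koszul l R).X (p - 1)))

open TensorProduct in
/-- The identification `M ⊗ K(l; R) = K(l; M)`. -/
def tens (M : Type) [AddCommGroup M] [Module R M] :
    (l : List R) → ∀ p, M ⊗[R] (koszul l R).X p ≃ₗ[R] (koszul l M).X p
  | [], p => TensorProduct.piScalarRight R R M (PLift (p = 1))
  | _ :: l, p => (TensorProduct.prodRight R R M ((koszul l R).X p) ((koszul l R).X (p - 1))).trans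
      ((tens M l p).prodCongr (tens M l (p - 1)))

open TensorProduct in
theorem tens_d (l : List R) (p : ℕ) (m : M) (z : (koszul l R).X p) :
    tens M l (p - 1) (m ⊗ₜ (koszul l R).d p z) = (koszul l M).d p (tens M l p (m ⊗ₜ z)) := by
  induction l generalizing p with
  | nil =>
    change tens M [] (p - 1) (m ⊗ₜ 0) = 0
    rw [tmul_zero, map_zero]
  | cons x l ih =>
    obtain ⟨a, b⟩ := z
    refine Prod.ext ?_ ?_
    · change tens M l (p - 1) (m ⊗ₜ ((koszul l R).d p a + x • b)) =
        (koszul l M).d p (tens M l p (m ⊗ₜ a)) + x • tens M l (p - 1) (m ⊗ₜ b)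
      rw [tmul_add, map_add, ih, tmul_smul, map_smul]
    · change tens M l (p - 1 - 1) (m ⊗ₜ (-(koszul l R).d (p - 1) b)) =
        -(koszul l M).d (p - 1) (tens M l (p - 1) (m ⊗ₜ b))
      rw [tmul_neg, map_neg, ih]

end General

end KComplex

namespace KComplex

/-! ### Comparison with `Tor` -/

section Tor

variable {R : Type} [CommRing R]

/-- The chain complex in `ModuleCat R` underlying `C`, with the index shift undone. -/
def toChain (C : KComplex R) : ChainComplex (ModuleCat.{0} R) ℕ :=
  ChainComplex.of (fun p => ModuleCat.of R (C.X (p + 1)))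
    (fun p => ModuleCat.ofHom (C.d (p + 2)))
    (fun p => by
      ext z
      exact C.dd (p + 3) z)

theorem toChain_d (C : KComplex R) (p : ℕ) :
    C.toChain.d (p + 1) p = ModuleCat.ofHom (C.d (p + 2)) :=
  ChainComplex.of_d (fun p => ModuleCat.of R (C.X (p + 1)))
    (fun p => ModuleCat.ofHom (C.d (p + 2))) p

variable {N : Type} [AddCommGroup N] [Module R N]

/-- The augmentation of `K(l; R)` as a chain map to `N` placed in degree `0`. -/
def resπ (l : List R) (f : R →ₗ[R] N) (h : IsRes l f) :
    (koszul l R).toChain ⟶ (ChainComplex.single₀ (ModuleCat.{0} R)).obj (ModuleCat.of R N) :=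
  (ChainComplex.toSingle₀Equiv _ _).symm
    ⟨ModuleCat.ofHom (f.comp (aug l)), by
      rw [toChain_d]
      ext z
      exact (h.2 _).2 ⟨z, rfl⟩⟩

theorem resπ_quasiIso (l : List R) (f : R →ₗ[R] N) (h : IsRes l f)
    (hf : Function.Surjective f) : QuasiIso (resπ l f h) where
  quasiIsoAt m := by
    cases m with
    | zero =>
      rw [ChainComplex.quasiIsoAt₀_iff, ShortComplex.quasiIso_iff_of_zeros' _ rfl rfl rfl]
      have e : (resπ l f h).f 0 = ModuleCat.ofHom (f.comp (aug l)) :=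
        ChainComplex.toSingle₀Equiv_symm_apply_f_zero _ _
      constructor
      · rw [ShortComplex.moduleCat_exact_iff]
        intro z hz
        change (resπ l f h).f 0 z = 0 at hz
        rw [e] at hz
        obtain ⟨w, hw⟩ := (h.2 z).1 hz
        refine ⟨w, ?_⟩
        change (koszul l R).toChain.d 1 0 w = z
        rw [toChain_d]
        exact hw
      · change Epi ((resπ l f h).f 0)
        rw [e]
        exact (ModuleCat.epi_iff_surjective (ModuleCat.ofHom (f.comp (aug l)))).2
          (hf.comp (aug_surjective l))
    | succ m =>
      rw [quasiIsoAt_iff_exactAt' (hL := ChainComplex.exactAt_succ_single_obj ..),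
        HomologicalComplex.exactAt_iff' _ (m + 2) (m + 1) m (by simp) (by simp),
        ShortComplex.moduleCat_exact_iff]
      intro z hz
      change (koszul l R).toChain.d (m + 1) m z = 0 at hz
      rw [toChain_d] at hz
      obtain ⟨w, hw⟩ := h.1 m z hz
      refine ⟨w, ?_⟩
      change (koszul l R).toChain.d (m + 2) (m + 1) w = z
      rw [toChain_d]
      exact hw

/-- The Koszul resolution of `N`. -/
def resolution (l : List R) (f : R →ₗ[R] N) (h : IsRes l f)
    (hf : Function.Surjective f) : ProjectiveResolution (ModuleCat.of R N) where
  complex := (koszul l R).toChain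
  projective p := inferInstanceAs (Projective (ModuleCat.of R ((koszul l R).X (p + 1))))
  π := resπ l f h
  quasiIso := resπ_quasiIso l f h hf

open MonoidalCategory in
/-- When `K(l; R)` resolves `N`, the homology of `K(l; M)` computes `Tor(M, N)`. -/
theorem nonempty_tor_equiv (l : List R) (f : R →ₗ[R] N) (h : IsRes l f)
    (hf : Function.Surjective f) (M : Type) [AddCommGroup M] [Module R M] (p : ℕ) :
    Nonempty ((((Tor (ModuleCat.{0} R) (p + 1)).obj (ModuleCat.of R M)).obj (ModuleCat.of R N))
      ≃ₗ[R] H (koszul l M) (p + 1)) := by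
  let F := (tensoringLeft (ModuleCat.{0} R)).obj (ModuleCat.of R M)
  let D := (F.mapHomologicalComplex (ComplexShape.down ℕ)).obj (koszul l R).toChain
  let e₁ := (resolution l f h hf).isoLeftDerivedObj F (p + 1)
  let e₂ : D.homology (p + 1) ≅ (D.sc' (p + 2) (p + 1) p).homology :=
    D.homologyIsoSc' (p + 2) (p + 1) p (by simp) (by simp)
  let T : ShortComplex (ModuleCat.{0} R) := ShortComplex.mk
    (ModuleCat.ofHom ((koszul l M).d (p + 3))) (ModuleCat.ofHom ((koszul l M).d (p + 2)))
    (by ext z; exact (koszul l M).dd (p + 3) z)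
  have comm : ∀ q, D.d (q + 1) q ≫ (tens M l (q + 1)).toModuleIso.hom =
      (tens M l (q + 2)).toModuleIso.hom ≫ ModuleCat.ofHom ((koszul l M).d (q + 2)) := by
    intro q
    have : D.d (q + 1) q = F.map (ModuleCat.ofHom ((koszul l R).d (q + 2))) :=
      congrArg F.map (toChain_d _ q)
    rw [this]
    apply ModuleCat.hom_ext
    refine TensorProduct.ext' fun m z => ?_
    exact tens_d l (q + 2) m z
  let e₃ : D.sc' (p + 2) (p + 1) p ≅ T :=
    ShortComplex.isoMk (tens M l (p + 3)).toModuleIso (tens M l (p + 2)).toModuleIso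
      (tens M l (p + 1)).toModuleIso (comm (p + 1)).symm (comm p).symm
  let e₄ := ShortComplex.homologyMapIso e₃ ≪≫ T.moduleCatHomologyIso
  let e₅ : (T.moduleCatLeftHomologyData.H : Type) ≃ₗ[R] H (koszul l M) (p + 1) :=
    Submodule.quotEquivOfEq _ _ (by
      ext z
      constructor
      · rintro ⟨w, hw⟩
        exact ⟨w, congrArg Subtype.val hw⟩
      · rintro ⟨w, hw⟩
        exact ⟨w, Subtype.ext hw⟩)
  exact ⟨(e₁ ≪≫ e₂ ≪≫ e₄).toLinearEquiv.trans e₅⟩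

end Tor

end KComplex

namespace KComplex

/-! ### Koszul homology of a module with square-zero action -/

section Dimension

variable {R : Type} [CommRing R] {M N : Type} [AddCommGroup M] [Module R M]
  [AddCommGroup N] [Module R N]

theorem aug_injective (l : List R) : Function.Injective (aug (M := M) l) := by
  induction l with
  | nil => exact fun a b h => funext fun _ => h
  | cons x l ih =>
    intro a b h
    exact Prod.ext (ih h) (Subsingleton.elim (α := (koszul l M).X 0) _ _)

/-- A functional killing `x M` for all `x` in the list kills the boundaries in degree `0`. -/
theorem map_aug_d_eq_zero {A : Type} [AddCommGroup A] (l : List R) (g : M →+ A)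
    (hg : ∀ x ∈ l, ∀ m, g (x • m) = 0) (z : (koszul l M).X 2) :
    g (aug l ((koszul l M).d 2 z)) = 0 := by
  induction l with
  | nil => exact map_zero g
  | cons x l ih =>
    obtain ⟨a, b⟩ := z
    change g (aug l ((koszul l M).d 2 a + x • b)) = 0
    rw [map_add, map_add, ih (fun y hy => hg y (List.mem_cons_of_mem _ hy)), zero_add, map_smul]
    exact hg x List.mem_cons_self _

/-- If the list kills the kernel of `f : M → N`, then the kernel of `K(l; f)` consists of
cycles. -/
theorem d_eq_zero_of_kmap_eq_zero (l : List R) {f : M →ₗ[R] N}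
    (hf : ∀ x ∈ l, ∀ m, f m = 0 → x • m = 0) (p : ℕ) (z : (koszul l M).X p)
    (hz : kmap l f p z = 0) : (koszul l M).d p z = 0 := by
  induction l generalizing p with
  | nil => rfl
  | cons x l ih =>
    have hf' : ∀ y ∈ l, ∀ m, f m = 0 → y • m = 0 := fun y hy => hf y (List.mem_cons_of_mem _ hy)
    obtain ⟨a, b⟩ := z
    have ha : kmap l f p a = 0 := congrArg Prod.fst hz
    have hb : kmap l f (p - 1) b = 0 := congrArg Prod.snd hz
    refine Prod.ext ?_ ?_
    · change (koszul l M).d p a + x • b = 0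
      rw [ih hf' p a ha, smul_eq_zero_of_kmap_eq_zero l (hf x List.mem_cons_self) _ b hb, add_zero]
    · change -(koszul l M).d (p - 1) b = 0
      rw [ih hf' _ b hb, neg_zero]

/-- Suppose the elements `xᵢ` kill the kernel of `f : M → N`, and there are additive maps `g i`
vanishing on `xⱼ M` for `j ≠ i` and such that `g i (xᵢ m) = 0` implies `f m = 0`.
Then in positive degree every cycle of `K(l; M)` lies in the kernel of `K(l; f)`. -/
theorem kmap_eq_zero_of_d_eq_zero {ι A : Type} [AddCommGroup A] (x : ι → R) (g : ι → M →+ A)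
    {f : M →ₗ[R] N} (L : List ι) (hL : L.Nodup)
    (hf : ∀ i ∈ L, ∀ m, f m = 0 → x i • m = 0)
    (hg : ∀ i ∈ L, ∀ m, g i (x i • m) = 0 → f m = 0)
    (hg' : ∀ i ∈ L, ∀ j ∈ L, i ≠ j → ∀ m, g i (x j • m) = 0)
    (p : ℕ) (z : (koszul (L.map x) M).X (p + 2)) (hz : (koszul (L.map x) M).d (p + 2) z = 0) :
    kmap (L.map x) f (p + 2) z = 0 := by
  induction L generalizing p with
  | nil => exact funext fun i => absurd i.down (by omega)
  | cons i L ih =>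
    rw [List.nodup_cons] at hL
    replace ih := ih hL.2 (fun j hj => hf j (List.mem_cons_of_mem _ hj))
      (fun j hj => hg j (List.mem_cons_of_mem _ hj))
      (fun j hj k hk => hg' j (List.mem_cons_of_mem _ hj) k (List.mem_cons_of_mem _ hk))
    obtain ⟨a, b, rfl⟩ : ∃ (a : (koszul (L.map x) M).X (p + 2))
      (b : (koszul (L.map x) M).X (p + 1)),
      z = ((a, b) : (koszul (L.map x) M).X (p + 2) × (koszul (L.map x) M).X (p + 1)) :=
      ⟨z.1, z.2, rfl⟩
    obtain ⟨y, hy⟩ : ∃ y : (koszul (L.map x) M).X (p + 1), y = (koszul (L.map x) M).d (p + 2) a :=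
      ⟨_, rfl⟩
    have h1 : y + x i • b = 0 := by
      rw [hy]
      exact congrArg Prod.fst hz
    have h2 : (koszul (L.map x) M).d (p + 1) b = 0 := neg_eq_zero.1 (congrArg Prod.snd hz)
    have hb : kmap (L.map x) f (p + 1) b = 0 := by
      cases p with
      | succ p => exact ih p b h2
      | zero =>
        -- in degree one the functional `g i` isolates the coefficient of `xᵢ`
        apply aug_injective
        rw [aug_kmap, map_zero]
        apply hg i List.mem_cons_self
        have h4 : g i (aug (L.map x) y) = 0 := by
          rw [hy]
          refine map_aug_d_eq_zero (L.map x) (g i) ?_ a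
          intro y hy m
          obtain ⟨j, hj, rfl⟩ := List.mem_map.1 hy
          exact hg' i List.mem_cons_self j (List.mem_cons_of_mem _ hj)
            (fun e => hL.1 (e ▸ hj)) m
        have h3 : g i (aug (L.map x) (y + x i • b)) = 0 := by rw [h1, map_zero, map_zero]
        rw [map_add, map_add, h4, zero_add, map_smul] at h3
        exact h3
    have hxb : x i • b = 0 :=
      smul_eq_zero_of_kmap_eq_zero _ (hf i List.mem_cons_self) _ b hb
    have ha : (koszul (L.map x) M).d (p + 2) a = 0 := by
      rw [hxb, add_zero, hy] at h1
      exact h1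
    exact Prod.ext (ih p a ha) hb

variable (k : Type) [Field k] [Algebra k R]

/-- The `k`-vector space structure on the terms of a complex of modules over a `k`-algebra. -/
abbrev kModule (C : KComplex R) (p : ℕ) : Module k (C.X p) :=
  Module.compHom _ (algebraMap k R)

attribute [local instance] kModule

theorem kModule_isScalarTower (C : KComplex R) (p : ℕ) : IsScalarTower k R (C.X p) :=
  IsScalarTower.of_algebraMap_smul fun _ _ => rfl

attribute [local instance] kModule_isScalarTower

theorem finite_and_finrank_X [Module k M] [IsScalarTower k R M] [Module.Finite k M]
    (l : List R) (p : ℕ) : Module.Finite k ((koszul l M).X p) ∧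
      Module.finrank k ((koszul l M).X (p + 1)) = l.length.choose p * Module.finrank k M := by
  have hsub : ∀ l : List R, Module.finrank k ((koszul l M).X 0) = 0 := fun l =>
    Module.finrank_zero_of_subsingleton
  induction l generalizing p with
  | nil =>
    let e (q : ℕ) : (koszul ([] : List R) M).X q ≃ₗ[k] (PLift (q = 1) → M) :=
      { Equiv.refl _ with
        map_add' := fun _ _ => rfl
        map_smul' := fun c z => funext fun i => algebraMap_smul R c (z i) }
    refine ⟨Module.Finite.equiv (e p).symm, ?_⟩
    rw [(e (p + 1)).finrank_eq, Module.finrank_pi_fintype]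
    cases p with
    | zero => simp
    | succ p => simp
  | cons x l ih =>
    let e (q : ℕ) : (koszul (x :: l) M).X q ≃ₗ[k] (koszul l M).X q × (koszul l M).X (q - 1) :=
      { Equiv.refl _ with
        map_add' := fun _ _ => rfl
        map_smul' := fun _ _ => rfl }
    have hfin : ∀ q, Module.Finite k ((koszul l M).X q) := fun q => (ih q).1
    refine ⟨Module.Finite.equiv (e p).symm, ?_⟩
    rw [(e (p + 1)).finrank_eq, Module.finrank_prod, (ih p).2]
    cases p with
    | zero =>
      rw [hsub l]
      simp
    | succ p =>
      rw [Nat.add_sub_cancel, (ih p).2, List.length_cons, Nat.choose_succ_succ']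
      ring

/-- The dimension of Koszul homology in positive degree, when the cycles in positive degree are
the kernel of `K(l; f)` for a surjection `f : M → N`. -/
theorem finite_and_finrank_H [Module k M] [IsScalarTower k R M] [Module.Finite k M]
    [Module k N] [IsScalarTower k R N] [Module.Finite k N] (l : List R) {f : M →ₗ[R] N}
    (hs : Function.Surjective f)
    (hd : ∀ p, ∀ z : (koszul l M).X (p + 2),
      (koszul l M).d (p + 2) z = 0 ↔ kmap l f (p + 2) z = 0) (p : ℕ) :
    Module.Finite k (H (koszul l M) (p + 1)) ∧
    Module.finrank k (H (koszul l M) (p + 1)) + l.length.choose (p + 2) * Module.finrank k N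
      + l.length.choose (p + 1) * Module.finrank k N =
      l.length.choose (p + 1) * Module.finrank k M := by
  have hfM : ∀ q, Module.Finite k ((koszul l M).X q) := fun q => (finite_and_finrank_X k l q).1
  have hfN : ∀ q, Module.Finite k ((koszul l N).X q) := fun q => (finite_and_finrank_X k l q).1
  have hrank : ∀ q, Module.finrank k (LinearMap.ker ((kmap l f (q + 1)).restrictScalars k)) +
      l.length.choose q * Module.finrank k N = l.length.choose q * Module.finrank k M := by
    intro q
    have h := LinearMap.finrank_range_add_finrank_ker ((kmap l f (q + 1)).restrictScalars k)
    rw [LinearMap.range_eq_top.2 (show Function.Surjective ((kmap l f (q + 1)).restrictScalars k) from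
      kmap_surjective l hs (q + 1)), finrank_top,
      (finite_and_finrank_X k l q).2, (finite_and_finrank_X k l q).2] at h
    omega
  let Z := LinearMap.ker ((koszul l M).d (p + 2))
  have hZ : Module.finrank k Z =
      Module.finrank k (LinearMap.ker ((kmap l f (p + 2)).restrictScalars k)) := by
    refine (LinearEquiv.finrank_eq (R := k) (M := Z)
      { toFun := fun z => ⟨z.1, (hd p z.1).1 z.2⟩
        invFun := fun z => ⟨z.1, (hd p z.1).2 z.2⟩
        map_add' := fun _ _ => rfl
        map_smul' := fun _ _ => rfl
        left_inv := fun _ => rfl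
        right_inv := fun _ => rfl })
  let w : (koszul l M).X (p + 3) →ₗ[k] Z :=
    (((koszul l M).d (p + 3)).codRestrict Z
      (fun z => (koszul l M).dd (p + 3) z)).restrictScalars k
  let B := (LinearMap.range ((koszul l M).d (p + 3))).submoduleOf Z
  let u : Z →ₗ[k] H (koszul l M) (p + 1) := B.mkQ.restrictScalars k
  have hu : Function.Surjective u := B.mkQ_surjective
  have hfZ : Module.Finite k Z :=
    Module.Finite.of_injective (Z.subtype.restrictScalars k) Z.subtype_injective
  have hw : LinearMap.ker w = LinearMap.ker ((kmap l f (p + 3)).restrictScalars k) := by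
    ext z
    rw [LinearMap.mem_ker, LinearMap.mem_ker]
    exact Subtype.ext_iff.trans (hd (p + 1) z)
  have hr := LinearMap.finrank_range_add_finrank_ker w
  rw [hw, (finite_and_finrank_X k l (p + 2)).2] at hr
  have hku : LinearMap.ker u = LinearMap.range w := by
    ext z
    rw [LinearMap.mem_ker]
    refine (Submodule.Quotient.mk_eq_zero _).trans ⟨?_, ?_⟩
    · rintro ⟨y, hy⟩
      exact ⟨y, Subtype.ext hy⟩
    · rintro ⟨y, hy⟩
      exact ⟨y, congrArg Subtype.val hy⟩
  have hh := LinearMap.finrank_range_add_finrank_ker u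
  rw [hku, LinearMap.range_eq_top.2 hu, finrank_top, hZ] at hh
  refine ⟨Module.Finite.of_surjective u hu, ?_⟩
  have h1 : Module.finrank k (LinearMap.ker ((kmap l f (p + 2)).restrictScalars k)) +
      l.length.choose (p + 1) * Module.finrank k N =
        l.length.choose (p + 1) * Module.finrank k M := hrank (p + 1)
  have h2 : Module.finrank k (LinearMap.ker ((kmap l f (p + 3)).restrictScalars k)) +
      l.length.choose (p + 2) * Module.finrank k N =
        l.length.choose (p + 2) * Module.finrank k M := hrank (p + 2)
  omega

end Dimension

end KComplex

/-! ### The Koszul resolution of the residue field -/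

section Resolution

variable {σ k : Type} [CommRing k]

/-- A variable outside `U` is a nonzerodivisor modulo the variables in `U`. -/
theorem mem_span_X_of_X_mul_mem {U : Set σ} {i : σ} (hi : i ∉ U) {s : MvPolynomial σ k}
    (h : X i * s ∈ Ideal.span (X '' U : Set (MvPolynomial σ k))) :
    s ∈ Ideal.span (X '' U : Set (MvPolynomial σ k)) := by
  classical
  rw [mem_ideal_span_X_image] at h ⊢
  intro m hm
  obtain ⟨j, hj, hne⟩ := h (Finsupp.single i 1 + m) (by
    rw [mem_support_iff, coeff_X_mul]
    exact mem_support_iff.1 hm)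
  refine ⟨j, hj, ?_⟩
  have hij : i ≠ j := fun e => hi (e ▸ hj)
  rwa [Finsupp.add_apply, Finsupp.single_eq_of_ne hij.symm, zero_add] at hne

/-- If `M = S / (X_i : i ∈ U)` and `N = S / (X_i : i ∈ U ∪ L)`, then `K(L; M)` resolves `N`. -/
theorem isRes_map_X (L : List σ) (hL : L.Nodup) (U : Set σ) (hU : ∀ i ∈ L, i ∉ U)
    {M N : Type} [AddCommGroup M] [Module (MvPolynomial σ k) M] [AddCommGroup N]
    [Module (MvPolynomial σ k) N]
    (f : MvPolynomial σ k →ₗ[MvPolynomial σ k] M) (hf : Function.Surjective f)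
    (hfU : ∀ s, f s = 0 ↔ s ∈ Ideal.span (X '' U : Set (MvPolynomial σ k)))
    (g : M →ₗ[MvPolynomial σ k] N)
    (hg : ∀ s, g (f s) = 0 ↔
      s ∈ Ideal.span (X '' (U ∪ {i | i ∈ L}) : Set (MvPolynomial σ k))) :
    KComplex.IsRes (L.map X) g := by
  induction L generalizing U M with
  | nil =>
    apply KComplex.isRes_nil
    rw [injective_iff_map_eq_zero]
    intro m hm
    obtain ⟨s, rfl⟩ := hf m
    simpa [hfU] using (hg s).1 hm
  | cons i L ih =>
    rw [List.nodup_cons] at hL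
    have hiU : i ∉ U := hU i List.mem_cons_self
    let Q : Submodule (MvPolynomial σ k) M :=
      LinearMap.range (LinearMap.lsmul (MvPolynomial σ k) M (X i))
    have hQ : ∀ m, (X i : MvPolynomial σ k) • m ∈ Q := fun m => ⟨m, rfl⟩
    have hgQ : Q ≤ LinearMap.ker g := by
      rintro _ ⟨m, rfl⟩
      obtain ⟨s, rfl⟩ := hf m
      rw [LinearMap.mem_ker, LinearMap.lsmul_apply, ← map_smul, hg, smul_eq_mul]
      exact Ideal.mul_mem_right _ _ (Ideal.subset_span ⟨i, Or.inr List.mem_cons_self, rfl⟩)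
    have hres := ih hL.2 (insert i U) (fun j hj => by
        rintro (rfl | h)
        · exact hL.1 hj
        · exact hU j (List.mem_cons_of_mem _ hj) h)
      (Q.mkQ.comp f) (Q.mkQ_surjective.comp hf) (fun s => by
        rw [LinearMap.comp_apply, Submodule.mkQ_apply, Submodule.Quotient.mk_eq_zero,
          Set.image_insert_eq, Ideal.mem_span_insert]
        constructor
        · rintro ⟨m, hm⟩
          obtain ⟨t, rfl⟩ := hf m
          refine ⟨t, s - t * X i, ?_, by ring⟩
          rw [← hfU, map_sub, ← hm, mul_comm, ← smul_eq_mul, map_smul]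
          exact sub_self _
        · rintro ⟨t, z, hz, rfl⟩
          rw [map_add, (hfU z).2 hz, add_zero, mul_comm, ← smul_eq_mul, map_smul]
          exact hQ _)
      (Q.liftQ g hgQ) (fun s => by
        have : (insert i U) ∪ {j | j ∈ L} = U ∪ {j | j ∈ i :: L} := by
          ext j
          simp [or_assoc, or_left_comm]
        rw [this, ← hg]
        rfl)
    have := KComplex.IsRes.cons (X i) (L.map X) (q := Q.mkQ) (fun m hm => ?_) Q.mkQ_surjective
      (fun m => (Submodule.Quotient.mk_eq_zero _).2 (hQ m)) (fun m hm => ?_) hres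
    · rwa [Q.liftQ_mkQ] at this
    · obtain ⟨s, rfl⟩ := hf m
      rw [← map_smul, hfU, smul_eq_mul] at hm
      exact (hfU s).2 (mem_span_X_of_X_mul_mem hiU hm)
    · obtain ⟨m', h⟩ := (Submodule.Quotient.mk_eq_zero _).1 hm
      exact ⟨m', h.symm⟩

end Resolution

/-- The augmentation `S → ℂ`. -/
def augCC (n : ℕ) : Spoly n →ₗ[Spoly n] CC n where
  toFun s := eval (fun _ => (0 : ℂ)) s
  map_add' := map_add _
  map_smul' a b := RingHom.map_mul (eval fun _ : Fin (n + 1) => (0 : ℂ)) a b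

theorem augCC_surjective (n : ℕ) : Function.Surjective (augCC n) :=
  fun c => ⟨C (c : ℂ), eval_C (R := ℂ) c⟩

theorem augCC_eq_zero_iff (n : ℕ) (s : Spoly n) :
    augCC n s = 0 ↔ s ∈ Ideal.span (X '' Set.univ : Set (Spoly n)) := by
  rw [mem_ideal_span_X_image]
  have : augCC n s = coeff 0 s := by
    rw [← constantCoeff_eq, ← eval_zero']
    rfl
  rw [this]
  constructor
  · intro h m hm
    by_contra! hne
    have : m = 0 := Finsupp.ext fun i => hne i (Set.mem_univ i)
    rw [this, mem_support_iff] at hm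
    exact hm h
  · intro h
    by_contra hne
    obtain ⟨i, -, hi⟩ := h 0 (mem_support_iff.2 hne)
    exact hi rfl

theorem isRes_augCC (n : ℕ) (L : List (Fin (n + 1))) (hL : L.Nodup) (h : ∀ i, i ∈ L) :
    KComplex.IsRes (L.map (X : Fin (n + 1) → Spoly n)) (augCC n) :=
  isRes_map_X L hL ∅ (fun _ _ => Set.notMem_empty _) LinearMap.id Function.surjective_id
    (fun s => by simp) (augCC n) (fun s => by
      have : (∅ : Set (Fin (n + 1))) ∪ {i | i ∈ L} = Set.univ := by
        ext i
        simp [h]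
      rw [this]
      exact augCC_eq_zero_iff n s)

/-! ### The coordinate ring and its Artinian reduction -/

section Toric

variable {n : ℕ}

/-- The parametrisation `X_i ↦ s tⁱ` of the cone over the rational normal curve; the outer
polynomial variable is `s` and the inner one is `t`. -/
def param (n : ℕ) : Spoly n →ₐ[ℂ] Polynomial (Polynomial ℂ) :=
  aeval fun i => Polynomial.monomial 1 (Polynomial.monomial (i : ℕ) 1)

/-- The coefficient of `s^d t^j` in the parametrisation of a polynomial. -/
def co (n d j : ℕ) : Spoly n →ₗ[ℂ] ℂ where
  toFun f := ((param n f).coeff d).coeff j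
  map_add' f g := by simp
  map_smul' c f := by simp

theorem param_X (i : Fin (n + 1)) :
    param n (X i) = Polynomial.monomial 1 (Polynomial.monomial (i : ℕ) 1) := aeval_X _ _

theorem co_zero_X_mul (j : ℕ) (i : Fin (n + 1)) (f : Spoly n) : co n 0 j (X i * f) = 0 := by
  change ((param n (X i * f)).coeff 0).coeff j = 0
  rw [map_mul, param_X, Polynomial.mul_coeff_zero, Polynomial.coeff_monomial]
  simp

theorem co_succ_X_mul (d j : ℕ) (i : Fin (n + 1)) (f : Spoly n) :
    co n (d + 1) j (X i * f) = if (i : ℕ) ≤ j then co n d (j - i) f else 0 := by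
  change ((param n (X i * f)).coeff (d + 1)).coeff j = if (i : ℕ) ≤ j then
    ((param n f).coeff d).coeff (j - i) else 0
  rw [map_mul, param_X, Polynomial.coeff_monomial_mul, Polynomial.monomial_one_right_eq_X_pow,
    Polynomial.coeff_X_pow_mul']

theorem co_C (d j : ℕ) (c : ℂ) : co n d j (C c) = if d = 0 ∧ j = 0 then c else 0 := by
  change ((param n (C c)).coeff d).coeff j = _
  have : param n (C c) = Polynomial.C (Polynomial.C c) := by
    rw [← MvPolynomial.algebraMap_eq, AlgHom.commutes]
    rfl
  rw [this, Polynomial.coeff_C]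
  by_cases hd : d = 0
  · simp [hd, Polynomial.coeff_C]
  · simp [hd]

/-- Only monomials `s^d t^j` with `j ≤ n d` occur in the parametrisation. -/
theorem co_eq_zero (f : Spoly n) {d j : ℕ} (h : n * d < j) : co n d j f = 0 := by
  induction f using MvPolynomial.induction_on generalizing d j with
  | C c =>
    rw [co_C, if_neg]
    omega
  | add f g hf hg => rw [map_add, hf h, hg h, add_zero]
  | mul_X f i hf =>
    rw [mul_comm]
    cases d with
    | zero => exact co_zero_X_mul j i f
    | succ d =>
      rw [co_succ_X_mul]
      split_ifs
      · apply hf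
        have := i.is_lt
        rw [mul_add] at h
        omega
      · rfl

theorem augCC_eq_co (f : Spoly n) : augCC n f = co n 0 0 f := by
  induction f using MvPolynomial.induction_on with
  | C c =>
    rw [co_C, if_pos ⟨rfl, rfl⟩]
    exact eval_C (R := ℂ) c
  | add f g hf hg =>
    rw [map_add, map_add, hf, hg]
    rfl
  | mul_X f i hf =>
    rw [mul_comm, co_zero_X_mul]
    change eval (fun _ => (0 : ℂ)) (X i * f) = (0 : ℂ)
    rw [map_mul, eval_X, zero_mul]

theorem co_eq_zero_of_mem {f : Spoly n} (hf : f ∈ veroneseIdeal n) (d j : ℕ) :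
    co n d j f = 0 := by
  have hle : veroneseIdeal n ≤ RingHom.ker (param n) := by
    refine Ideal.span_le.2 ?_
    rintro _ ⟨i, j, k, m, h, rfl⟩
    change param n _ = 0
    rw [map_sub, map_mul, map_mul, param_X, param_X, param_X, param_X]
    simp only [Polynomial.monomial_mul_monomial, h, sub_self]
  change ((param n f).coeff d).coeff j = 0
  rw [show param n f = 0 from hle hf]
  simp

/-- The standard monomial of degree `d` mapping to `s^d t^j` (for `j ≤ n d`): as many factors
`X_n` as possible, one further factor, and then factors `X_0`. -/
def std (n : ℕ) : ℕ → ℕ → Spoly n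
  | 0, _ => 1
  | d + 1, j => X ⟨min j n, by omega⟩ * std n d (j - n)

/-- Modulo the quadrics, multiplication by a variable takes standard monomials to standard
monomials. -/
theorem X_mul_std_sub_mem (i : Fin (n + 1)) {d j : ℕ} (h : j ≤ n * d) :
    X i * std n d j - std n (d + 1) (i + j) ∈ veroneseIdeal n := by
  have hi := i.is_lt
  induction d generalizing i j with
  | zero =>
    obtain rfl : j = 0 := by omega
    have : (⟨min (i + 0) n, by omega⟩ : Fin (n + 1)) = i := Fin.ext (by simp; omega)
    simp only [std, this, sub_self, Submodule.zero_mem]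
  | succ d ih =>
    have quad : ∀ a b c e : Fin (n + 1), (a : ℕ) + b = c + e →
        X a * X b - X c * X e ∈ veroneseIdeal n := fun a b c e h =>
      Ideal.subset_span ⟨a, b, c, e, h, rfl⟩
    rw [mul_add, mul_one] at h
    by_cases hj : n ≤ j
    · have h1 : (⟨min j n, by omega⟩ : Fin (n + 1)) = Fin.last n := Fin.ext (by simp; omega)
      have h2 : (⟨min (i + j) n, by omega⟩ : Fin (n + 1)) = Fin.last n :=
        Fin.ext (by simp; omega)
      have h3 := Ideal.mul_mem_left _ (X (Fin.last n)) (ih i (j := j - n) (by omega) hi)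
      rw [std, std, h1, h2, Nat.add_sub_assoc hj]
      convert h3 using 1
      ring
    · have h0 : j - n = 0 := by omega
      have h1 : min j n = j := by omega
      by_cases hij : n ≤ i + j
      · have h2 : (⟨min (i + j) n, by omega⟩ : Fin (n + 1)) = Fin.last n :=
          Fin.ext (by simp; omega)
        let c : Fin (n + 1) := ⟨i + j - n, by omega⟩
        have h3 := Ideal.mul_mem_left _ (X (Fin.last n)) (ih c (j := 0) (by omega) c.is_lt)
        have h4 := Ideal.mul_mem_right (std n d 0) _
          (quad i ⟨min j n, by omega⟩ (Fin.last n) c (by simp [c]; omega))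
        rw [std, std, h0, h2]
        convert Ideal.add_mem _ h3 h4 using 1
        simp only [c, add_zero]
        ring
      · have h2 : i + j - n = 0 := by omega
        have h4 := Ideal.mul_mem_right (std n d 0) _
          (quad i ⟨min j n, by omega⟩ ⟨min (i + j) n, by omega⟩ 0 (by simp; omega))
        have h5 : (⟨min 0 n, by omega⟩ : Fin (n + 1)) = 0 := Fin.ext (by simp)
        rw [std, std, h0, h2, std, Nat.zero_sub, h5]
        convert h4 using 1
        ring

/-- The linear map sending `s^d t^j` to the standard monomial of the same degree. -/
def stdLift (n : ℕ) : Polynomial (Polynomial ℂ) →ₗ[ℂ] Spoly n :=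
  Polynomial.lsum fun d => Polynomial.lsum fun j => LinearMap.toSpanSingleton ℂ _ (std n d j)

theorem stdLift_monomial (d j : ℕ) (c : ℂ) :
    stdLift n (Polynomial.monomial d (Polynomial.monomial j c)) = c • std n d j := by
  simp [stdLift]

/-- Modulo the quadrics every polynomial is a combination of standard monomials, with the
coefficients read off from its parametrisation. -/
theorem sub_stdLift_param_mem (f : Spoly n) : f - stdLift n (param n f) ∈ veroneseIdeal n := by
  induction f using MvPolynomial.induction_on' with
  | monomial u a =>
    obtain ⟨c, d, j, -, h1, h2⟩ : ∃ (c : ℂ) (d j : ℕ), j ≤ n * d ∧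
        param n (monomial u a) = Polynomial.monomial d (Polynomial.monomial j c) ∧
        monomial u a - c • std n d j ∈ veroneseIdeal n := by
      refine MvPolynomial.induction_on_monomial (motive := fun f => ∃ (c : ℂ) (d j : ℕ),
        j ≤ n * d ∧ param n f = Polynomial.monomial d (Polynomial.monomial j c) ∧
        f - c • std n d j ∈ veroneseIdeal n) ?_ ?_ u a
      · intro a
        refine ⟨a, 0, 0, le_rfl, ?_, ?_⟩
        · rw [← MvPolynomial.algebraMap_eq, AlgHom.commutes]
          rfl
        · rw [std, smul_eq_C_mul, mul_one, sub_self]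
          exact Submodule.zero_mem _
      · rintro f i ⟨c, d, j, h, h1, h2⟩
        refine ⟨c, d + 1, i + j, ?_, ?_, ?_⟩
        · have := i.is_lt
          rw [mul_add]
          omega
        · rw [map_mul, h1, param_X, Polynomial.monomial_mul_monomial,
            Polynomial.monomial_mul_monomial, mul_one, add_comm j]
        · have h3 := Ideal.mul_mem_left _ (X i) h2
          have h4 := Ideal.mul_mem_left _ (C c) (X_mul_std_sub_mem i h)
          convert Ideal.add_mem _ h3 h4 using 1
          simp only [smul_eq_C_mul]
          ring
    rw [h1, stdLift_monomial]
    exact h2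
  | add f g hf hg =>
    rw [map_add, map_add]
    convert Ideal.add_mem _ hf hg using 1
    ring

/-- Membership in an ideal containing the quadrics can be tested on the standard monomials which
occur in the parametrisation with nonzero coefficient. -/
theorem mem_of_co {J : Ideal (Spoly n)} (hJ : veroneseIdeal n ≤ J) {f : Spoly n}
    (h : ∀ d j, j ≤ n * d → std n d j ∈ J ∨ co n d j f = 0) : f ∈ J := by
  have h1 : stdLift n (param n f) ∈ J := by
    change (param n f).sum (fun d q => q.sum fun j c => c • std n d j) ∈ J
    refine Ideal.sum_mem _ fun d _ => Ideal.sum_mem _ fun j _ => ?_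
    change co n d j f • std n d j ∈ J
    by_cases hj : j ≤ n * d
    · rcases h d j hj with h | h
      · rw [smul_eq_C_mul]
        exact Ideal.mul_mem_left _ _ h
      · rw [h, zero_smul]
        exact Submodule.zero_mem _
    · rw [co_eq_zero f (by omega), zero_smul]
      exact Submodule.zero_mem _
  have := Ideal.add_mem _ (hJ (sub_stdLift_param_mem f)) h1
  rwa [sub_add_cancel] at this

theorem mem_veroneseIdeal_iff (f : Spoly n) :
    f ∈ veroneseIdeal n ↔ ∀ d j, co n d j f = 0 :=
  ⟨fun h => co_eq_zero_of_mem h, fun h => mem_of_co le_rfl fun d j _ => Or.inr (h d j)⟩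

/-- The ideal of the section of the cone by `X_0 = 0`. -/
def J₁ (n : ℕ) : Ideal (Spoly n) := veroneseIdeal n ⊔ Ideal.span {X 0}

/-- The ideal of the section of the cone by `X_0 = X_n = 0`. -/
def J₂ (n : ℕ) : Ideal (Spoly n) := J₁ n ⊔ Ideal.span {X (Fin.last n)}

theorem X_zero_mem_J₁ : X 0 ∈ J₁ n := Ideal.mem_sup_right (Ideal.mem_span_singleton_self _)

theorem X_last_mem_J₂ : X (Fin.last n) ∈ J₂ n :=
  Ideal.mem_sup_right (Ideal.mem_span_singleton_self _)

/-- A standard monomial has a factor `X_0` when `j ≤ n (d - 1)`. -/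
theorem std_mem_J₁ (hn : 0 < n) {d j : ℕ} (h : j + n ≤ n * d) : std n d j ∈ J₁ n := by
  induction d generalizing j with
  | zero => omega
  | succ d ih =>
    rw [mul_add, mul_one] at h
    rw [std]
    by_cases hj : n ≤ j
    · exact Ideal.mul_mem_left _ _ (ih (by omega))
    · have h5 : (⟨min 0 n, by omega⟩ : Fin (n + 1)) = 0 := Fin.ext (by simp)
      rw [show j - n = 0 by omega]
      cases d with
      | zero =>
        obtain rfl : j = 0 := by omega
        rw [h5]
        exact Ideal.mul_mem_right _ _ X_zero_mem_J₁
      | succ d =>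
        rw [std, h5]
        exact Ideal.mul_mem_left _ _ (Ideal.mul_mem_right _ _ X_zero_mem_J₁)

theorem mem_J₁_iff (hn : 0 < n) (f : Spoly n) :
    f ∈ J₁ n ↔ ∀ d j, n * d < j + n → co n d j f = 0 := by
  constructor
  · intro hf d j h
    obtain ⟨a, ha, b, hb, rfl⟩ := Submodule.mem_sup.1 hf
    obtain ⟨b, rfl⟩ := Ideal.mem_span_singleton.1 hb
    rw [map_add, co_eq_zero_of_mem ha, zero_add]
    cases d with
    | zero => exact co_zero_X_mul j 0 b
    | succ d =>
      rw [co_succ_X_mul, Fin.val_zero, if_pos (Nat.zero_le _)]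
      apply co_eq_zero
      rw [mul_add] at h
      simp
      omega
  · intro h
    refine mem_of_co le_sup_left fun d j hj => ?_
    by_cases hdj : n * d < j + n
    · exact Or.inr (h d j hdj)
    · exact Or.inl (std_mem_J₁ hn (by omega))

theorem mem_J₂_iff (hn : 0 < n) (f : Spoly n) :
    f ∈ J₂ n ↔ co n 0 0 f = 0 ∧ ∀ j, 0 < j → j < n → co n 1 j f = 0 := by
  have key : f ∈ J₂ n ↔ ∀ d j, n * d < j + n → j < n → co n d j f = 0 := by
    constructor
    · intro hf d j h hj
      obtain ⟨a, ha, b, hb, rfl⟩ := Submodule.mem_sup.1 hf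
      obtain ⟨b, rfl⟩ := Ideal.mem_span_singleton.1 hb
      rw [map_add, (mem_J₁_iff hn a).1 ha d j h, zero_add]
      cases d with
      | zero => exact co_zero_X_mul j _ b
      | succ d =>
        rw [co_succ_X_mul, if_neg]
        simpa using hj
    · intro h
      refine mem_of_co (le_sup_left.trans le_sup_left) fun d j hj => ?_
      by_cases hdj : n * d < j + n
      · by_cases hjn : j < n
        · exact Or.inr (h d j hdj hjn)
        · cases d with
          | zero => omega
          | succ d =>
            have h1 : (⟨min j n, by omega⟩ : Fin (n + 1)) = Fin.last n :=
              Fin.ext (by simp; omega)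
            rw [std, h1]
            exact Or.inl (Ideal.mul_mem_right _ _ X_last_mem_J₂)
      · exact Or.inl (Ideal.mem_sup_left (std_mem_J₁ hn (by omega)))
  rw [key]
  constructor
  · intro h
    exact ⟨h 0 0 (by omega) hn, fun j hj hjn => h 1 j (by omega) hjn⟩
  · rintro ⟨h0, h1⟩ d j hd hj
    rcases Nat.lt_or_ge d 2 with hd2 | hd2
    · interval_cases d
      · rcases Nat.eq_zero_or_pos j with rfl | hj0
        · exact h0
        · exact co_eq_zero f (by omega)
      · exact h1 j (by omega) hj
    · have := Nat.mul_le_mul_left n hd2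
      omega

theorem mem_veroneseIdeal_of_X_zero_mul_mem {f : Spoly n} (h : X 0 * f ∈ veroneseIdeal n) :
    f ∈ veroneseIdeal n := by
  rw [mem_veroneseIdeal_iff] at h ⊢
  intro d j
  have := h (d + 1) j
  rwa [co_succ_X_mul, Fin.val_zero, if_pos (Nat.zero_le _)] at this

theorem mem_J₁_of_X_last_mul_mem (hn : 0 < n) {f : Spoly n} (h : X (Fin.last n) * f ∈ J₁ n) :
    f ∈ J₁ n := by
  rw [mem_J₁_iff hn] at h ⊢
  intro d j hd
  have := h (d + 1) (j + n) (by rw [mul_add]; omega)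
  rwa [co_succ_X_mul, if_pos (by simp), Fin.val_last, Nat.add_sub_cancel] at this

end Toric

/-! ### Assembling the computation -/

section Assembly

/-- Passing to a quotient by one more element `x`, a nonzerodivisor modulo `I`, does not change
Koszul homology. -/
theorem nonempty_H_equiv_quotient {R : Type} [CommRing R] {I J : Ideal R} {x : R}
    (hJ : J = I ⊔ Ideal.span {x}) (hx : ∀ f, x * f ∈ I → f ∈ I) (l : List R) (p : ℕ) :
    Nonempty (KComplex.H (KComplex.koszul (x :: l) (R ⧸ I)) p ≃ₗ[R]
      KComplex.H (KComplex.koszul l (R ⧸ J)) p) := by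
  have hle : I ≤ J := hJ ▸ le_sup_left
  have hxJ : x ∈ J := hJ ▸ Ideal.mem_sup_right (Ideal.mem_span_singleton_self x)
  refine KComplex.nonempty_H_equiv x l (Submodule.factor hle) ?_ (Submodule.factor_surjective hle)
    ?_ ?_ p
  · intro m hm
    obtain ⟨f, rfl⟩ := Submodule.Quotient.mk_surjective I m
    rw [← Submodule.Quotient.mk_smul, Submodule.Quotient.mk_eq_zero] at hm
    exact (Submodule.Quotient.mk_eq_zero I).2 (hx f hm)
  · intro m
    obtain ⟨f, rfl⟩ := Submodule.Quotient.mk_surjective I m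
    exact (Submodule.Quotient.mk_eq_zero J).2 (J.mul_mem_right f hxJ)
  · intro m hm
    obtain ⟨f, rfl⟩ := Submodule.Quotient.mk_surjective I m
    have hf : f ∈ J := (Submodule.Quotient.mk_eq_zero J).1 hm
    rw [hJ] at hf
    obtain ⟨a, ha, b, hb, rfl⟩ := Submodule.mem_sup.1 hf
    obtain ⟨b, rfl⟩ := Ideal.mem_span_singleton.1 hb
    refine ⟨Submodule.Quotient.mk b, ?_⟩
    rw [Submodule.Quotient.mk_add, (Submodule.Quotient.mk_eq_zero I).2 ha, zero_add]
    rfl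

/-- The indices strictly between `0` and `r + 1`. -/
def mid (r : ℕ) (i : Fin r) : Fin (r + 2) := i.succ.castSucc

theorem val_mid {r : ℕ} (i : Fin r) : (mid r i : ℕ) = i + 1 := rfl

/-- All indices, with the two ends of the range first. -/
def indices (r : ℕ) : List (Fin (r + 2)) :=
  0 :: Fin.last (r + 1) :: (List.finRange r).map (mid r)

theorem nodup_indices (r : ℕ) : (indices r).Nodup := by
  have hinj : Function.Injective (mid r) := fun a b h => by
    have := congrArg Fin.val h
    rw [val_mid, val_mid] at this
    exact Fin.ext (by omega)
  rw [indices, List.nodup_cons, List.nodup_cons]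
  refine ⟨?_, ?_, (List.nodup_finRange r).map hinj⟩
  · rw [List.mem_cons, List.mem_map, not_or]
    refine ⟨fun h => ?_, ?_⟩
    · have := congrArg Fin.val h
      simp at this
    · rintro ⟨i, -, h⟩
      have := congrArg Fin.val h
      rw [val_mid] at this
      simp at this
  · rw [List.mem_map]
    rintro ⟨i, -, h⟩
    have := congrArg Fin.val h
    rw [val_mid, Fin.val_last] at this
    omega

theorem mem_indices (r : ℕ) (i : Fin (r + 2)) : i ∈ indices r := by
  rw [indices, List.mem_cons, List.mem_cons, List.mem_map]
  by_cases h0 : (i : ℕ) = 0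
  · exact Or.inl (Fin.ext h0)
  by_cases h1 : (i : ℕ) = r + 1
  · exact Or.inr (Or.inl (Fin.ext h1))
  refine Or.inr (Or.inr ⟨⟨i - 1, by omega⟩, List.mem_finRange _, Fin.ext ?_⟩)
  rw [val_mid]
  simp
  omega

/-- The Artinian reduction `S / (I, X_0, X_n)` of the coordinate ring. -/
abbrev Art (n : ℕ) : Type := Spoly n ⧸ J₂ n

theorem mem_J₂_iff_coord {r : ℕ} (f : Spoly (r + 1)) : f ∈ J₂ (r + 1) ↔
    co (r + 1) 0 0 f = 0 ∧ ∀ i : Fin r, co (r + 1) 1 (i + 1) f = 0 := by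
  rw [mem_J₂_iff (Nat.succ_pos r)]
  refine and_congr_right fun _ => ⟨fun h i => h _ (by omega) (by omega), fun h j hj hj' => ?_⟩
  have := h ⟨j - 1, by omega⟩
  simpa [Nat.sub_add_cancel hj] using this

/-- The coordinates of a polynomial with respect to the basis `1, X_1, …, X_r` of the Artinian
reduction, where `n = r + 1`. -/
def artCoord (r : ℕ) : Spoly (r + 1) →ₗ[ℂ] ℂ × (Fin r → ℂ) :=
  (co (r + 1) 0 0).prod (LinearMap.pi fun i => co (r + 1) 1 (i + 1))

theorem co_one_X_mid_mul {r : ℕ} (i j : Fin r) (f : Spoly (r + 1)) :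
    co (r + 1) 1 (i + 1) (X (mid r j) * f) = if j = i then co (r + 1) 0 0 f else 0 := by
  rw [co_succ_X_mul, val_mid]
  by_cases hij : j = i
  · rw [if_pos hij, hij, if_pos le_rfl, Nat.sub_self]
  · have : (j : ℕ) ≠ i := fun h => hij (Fin.ext h)
    rw [if_neg hij]
    split_ifs
    · apply co_eq_zero
      omega
    · rfl

theorem artCoord_surjective (r : ℕ) : Function.Surjective (artCoord r) := by
  rintro ⟨c, v⟩
  refine ⟨C c + ∑ j, X (mid r j) * C (v j), Prod.ext ?_ (funext fun i => ?_)⟩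
  · change co (r + 1) 0 0 _ = c
    rw [map_add, map_sum, co_C, if_pos ⟨rfl, rfl⟩, Finset.sum_eq_zero, add_zero]
    exact fun j _ => co_zero_X_mul _ _ _
  · change co (r + 1) 1 (i + 1) _ = v i
    simp only [map_add, map_sum, co_one_X_mid_mul, co_C]
    simp

theorem finite_and_finrank_art (r : ℕ) :
    Module.Finite ℂ (Art (r + 1)) ∧ Module.finrank ℂ (Art (r + 1)) = r + 1 := by
  have hker : LinearMap.ker (artCoord r) = (J₂ (r + 1)).restrictScalars ℂ := by
    ext f
    rw [LinearMap.mem_ker, Submodule.restrictScalars_mem, mem_J₂_iff_coord]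
    simp [artCoord, Prod.ext_iff, funext_iff]
  let e : Art (r + 1) ≃ₗ[ℂ] ℂ × (Fin r → ℂ) :=
    (Submodule.quotEquivOfEq ((J₂ (r + 1)).restrictScalars ℂ) _ hker.symm).trans
      ((artCoord r).quotKerEquivOfSurjective (artCoord_surjective r))
  refine ⟨Module.Finite.equiv e.symm, ?_⟩
  rw [e.finrank_eq]
  simp
  ring

/-- The augmentation of the Artinian reduction. -/
def artAug (r : ℕ) : Art (r + 1) →ₗ[Spoly (r + 1)] CC (r + 1) :=
  (J₂ (r + 1)).liftQ (augCC (r + 1)) fun f hf => by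
    rw [LinearMap.mem_ker, augCC_eq_co]
    exact ((mem_J₂_iff_coord f).1 hf).1

/-- The coordinate of `X_{i+1}` on the Artinian reduction. -/
def artCo (r : ℕ) (i : Fin r) : Art (r + 1) →+ ℂ :=
  (((J₂ (r + 1)).restrictScalars ℂ).liftQ (co (r + 1) 1 (i + 1))
    fun f hf => ((mem_J₂_iff_coord f).1 hf).2 i).toAddMonoidHom

theorem artAug_eq_zero_iff {r : ℕ} (f : Spoly (r + 1)) :
    artAug r (Submodule.Quotient.mk f) = 0 ↔ co (r + 1) 0 0 f = 0 := by
  rw [← augCC_eq_co]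
  rfl

theorem X_mid_smul_eq_zero {r : ℕ} (i : Fin r) (m : Art (r + 1)) (hm : artAug r m = 0) :
    (X (mid r i) : Spoly (r + 1)) • m = 0 := by
  obtain ⟨f, rfl⟩ := Submodule.Quotient.mk_surjective _ m
  rw [artAug_eq_zero_iff] at hm
  rw [← Submodule.Quotient.mk_smul, Submodule.Quotient.mk_eq_zero, mem_J₂_iff_coord, smul_eq_mul]
  refine ⟨co_zero_X_mul _ _ _, fun j => ?_⟩
  rw [co_one_X_mid_mul, hm, ite_self]

theorem artCo_X_mid_smul {r : ℕ} (i j : Fin r) (f : Spoly (r + 1)) :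
    artCo r i ((X (mid r j) : Spoly (r + 1)) • (Submodule.Quotient.mk f : Art (r + 1))) =
      if j = i then co (r + 1) 0 0 f else 0 :=
  co_one_X_mid_mul i j f

/-- The cycles in positive degree of `K(X_1, …, X_r; B)` for the Artinian reduction `B` are the
elements with coefficients in the augmentation ideal of `B`. -/
theorem d_eq_zero_iff_kmap_artAug {r : ℕ} (p : ℕ)
    (z : (KComplex.koszul ((List.finRange r).map fun i => (X (mid r i) : Spoly (r + 1)))
      (Art (r + 1))).X (p + 2)) :
    (KComplex.koszul ((List.finRange r).map fun i => (X (mid r i) : Spoly (r + 1)))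
      (Art (r + 1))).d (p + 2) z = 0 ↔ KComplex.kmap _ (artAug r) (p + 2) z = 0 := by
  constructor
  · refine KComplex.kmap_eq_zero_of_d_eq_zero _ (artCo r) _ (List.nodup_finRange r)
      (fun i _ => X_mid_smul_eq_zero i) (fun i _ m hm => ?_) (fun i _ j _ hij m => ?_) p z
    · obtain ⟨f, rfl⟩ := Submodule.Quotient.mk_surjective _ m
      rw [artCo_X_mid_smul, if_pos rfl] at hm
      exact (artAug_eq_zero_iff f).2 hm
    · obtain ⟨f, rfl⟩ := Submodule.Quotient.mk_surjective _ m
      rw [artCo_X_mid_smul, if_neg hij.symm]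
  · refine KComplex.d_eq_zero_of_kmap_eq_zero _ (fun x hx m hm => ?_) (p + 2) z
    obtain ⟨i, -, rfl⟩ := List.mem_map.1 hx
    exact X_mid_smul_eq_zero i m hm

/-- The standard `ℂ`-vector space structure on the residue field. -/
abbrev moduleCC (n : ℕ) : Module ℂ (CC n) := inferInstanceAs (Module ℂ ℂ)

attribute [local instance] moduleCC KComplex.kModule KComplex.kModule_isScalarTower

theorem isScalarTower_CC (n : ℕ) : IsScalarTower ℂ (Spoly n) (CC n) :=
  IsScalarTower.of_algebraMap_smul fun c x =>
    congrArg (fun a : ℂ => a * (show ℂ from x)) (eval_C (R := ℂ) c)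

attribute [local instance] isScalarTower_CC

theorem finite_and_finrank_koszul_art (r p : ℕ) :
    Module.Finite ℂ (KComplex.H (KComplex.koszul ((List.finRange r).map fun i =>
      (X (mid r i) : Spoly (r + 1))) (Art (r + 1))) (p + 1)) ∧
    Module.finrank ℂ (KComplex.H (KComplex.koszul ((List.finRange r).map fun i =>
      (X (mid r i) : Spoly (r + 1))) (Art (r + 1))) (p + 1)) =
        (p + 1) * (r + 1).choose (p + 2) := by
  have hfin : Module.Finite ℂ (Art (r + 1)) := (finite_and_finrank_art r).1
  have hfin' : Module.Finite ℂ (CC (r + 1)) := inferInstanceAs (Module.Finite ℂ ℂ)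
  have hCC : Module.finrank ℂ (CC (r + 1)) = 1 := Module.finrank_self ℂ
  have hs : Function.Surjective (artAug r) := fun c => by
    obtain ⟨f, hf⟩ := augCC_surjective (r + 1) c
    exact ⟨Submodule.Quotient.mk f, hf⟩
  obtain ⟨h1, h2⟩ := KComplex.finite_and_finrank_H ℂ _ hs d_eq_zero_iff_kmap_artAug p
  refine ⟨h1, ?_⟩
  -- `(r + 1) C(r, p + 1) = (p + 2) C(r + 1, p + 2)`, then the Pascal rule
  rw [(finite_and_finrank_art r).2, hCC, List.length_map, List.length_finRange, mul_comm _ (r + 1),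
    Nat.add_one_mul_choose_eq] at h2
  rw [Nat.choose_succ_succ'] at h2 ⊢
  linarith

theorem nonempty_torModule_equiv (r p : ℕ) :
    Nonempty (TorModule (r + 1) (p + 1) ≃ₗ[Spoly (r + 1)]
      KComplex.H (KComplex.koszul ((List.finRange r).map fun i =>
        (X (mid r i) : Spoly (r + 1))) (Art (r + 1))) (p + 1)) := by
  obtain ⟨e₁⟩ := KComplex.nonempty_tor_equiv _ _
    (isRes_augCC (r + 1) _ (nodup_indices r) (mem_indices r)) (augCC_surjective (r + 1))
    (Aalg (r + 1)) p
  rw [indices, List.map_cons, List.map_cons, List.map_map] at e₁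
  obtain ⟨e₂⟩ := nonempty_H_equiv_quotient (I := veroneseIdeal (r + 1)) (J := J₁ (r + 1)) rfl
    (fun f hf => mem_veroneseIdeal_of_X_zero_mul_mem hf)
    (X (Fin.last (r + 1)) :: (List.finRange r).map fun i => X (mid r i)) (p + 1)
  obtain ⟨e₃⟩ := nonempty_H_equiv_quotient (I := J₁ (r + 1)) (J := J₂ (r + 1)) rfl
    (fun f hf => mem_J₁_of_X_last_mul_mem (Nat.succ_pos r) hf)
    ((List.finRange r).map fun i => X (mid r i)) (p + 1)
  exact ⟨(e₁.trans e₂).trans e₃⟩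

theorem finiteDimensional_and_finrank_torModule (r p : ℕ) :
    FiniteDimensional ℂ (TorModule (r + 1) (p + 1)) ∧
    Module.finrank ℂ (TorModule (r + 1) (p + 1)) = (p + 1) * (r + 1).choose (p + 2) := by
  obtain ⟨e⟩ := nonempty_torModule_equiv r p
  obtain ⟨h1, h2⟩ := finite_and_finrank_koszul_art r p
  let e' : TorModule (r + 1) (p + 1) ≃ₗ[ℂ] KComplex.H (KComplex.koszul
      ((List.finRange r).map fun i => (X (mid r i) : Spoly (r + 1))) (Art (r + 1))) (p + 1) :=
    { e with
      map_smul' := fun c z => (e.map_smul (algebraMap ℂ (Spoly (r + 1)) c) z).trans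
        (algebraMap_smul (Spoly (r + 1)) c (e z)) }
  exact ⟨Module.Finite.equiv e'.symm, e'.finrank_eq.trans h2⟩

end Assembly

/-- Syzygies of the rational normal (Veronese) curve of degree `n` in `ℙⁿ`:
for `p ≥ 1`, `Tor_p^S(A, ℂ)` is finite-dimensional over `ℂ` of dimension `p · C(n, p+1)`;
in particular it vanishes for `p ≥ n`. -/
theorem syzygies_veronese_curve (n p : ℕ) (hn : 0 < n) (hp : 1 ≤ p) :
    FiniteDimensional ℂ (TorModule n p) ∧
      Module.finrank ℂ (TorModule n p) = p * Nat.choose n (p + 1) := by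
  obtain ⟨r, rfl⟩ := Nat.exists_eq_succ_of_ne_zero hn.ne'
  obtain ⟨q, rfl⟩ := Nat.exists_eq_add_of_le' hp
  exact finiteDimensional_and_finrank_torModule r q

end
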